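/- arXiv:1908.06146 — 2 statements merged into one kernel-verified Lean document; each statement's English description precedes it below -/
import Mathlib

section
/- Let θ > 0, κ ∈ ℝ, and let u : [0,θ] → (0,∞) be σ_κ-concave. Then for every r₀ ∈ (0,θ) and every r ∈ (r₀, θ) one has u(r) ≤ u(r₀)·cos_κ(r − r₀) + d⁺u(r₀)·sin_κ(r − r₀); in particular, the right-hand side u(r₀)·cos_κ(r − r₀) + d⁺u(r₀)·sin_κ(r − r₀) is strictly positive for all r ∈ (r₀, θ). -/
open Real Set Filter MeasureTheory Topology

/-- Generalized sine: the solution of `v'' + κ v = 0`, `v 0 = 0`, `v' 0 = 1`. -/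
noncomputable def sinK (κ r : ℝ) : ℝ :=
  if 0 < κ then Real.sin (Real.sqrt κ * r) / Real.sqrt κ
  else if κ = 0 then r
  else Real.sinh (Real.sqrt (-κ) * r) / Real.sqrt (-κ)

/-- Generalized cosine: the solution of `v'' + κ v = 0`, `v 0 = 1`, `v' 0 = 0`. -/
noncomputable def cosK (κ r : ℝ) : ℝ :=
  if 0 < κ then Real.cos (Real.sqrt κ * r)
  else if κ = 0 then 1
  else Real.cosh (Real.sqrt (-κ) * r)

/-- Distortion coefficient `σ_κ^{(t)}(θ)` (for `θ < π_κ`; `σ_κ^{(t)}(0) = t`). -/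
noncomputable def sigmaCoeff (κ t θ : ℝ) : ℝ :=
  if θ = 0 then t else sinK κ (t * θ) / sinK κ θ

/-- `u` is `σ_κ`-concave on `I ⊆ ℝ`.  The requirement `θ := |r₁ - r₀| < π_κ`
(encoded by `κ ≤ 0 ∨ |r₁ - r₀| < π/√κ`) expresses that the inequality with the
value `σ_κ^{(t)}(θ) = ∞` for `θ ≥ π_κ` cannot hold for a positive function. -/
def IsSigmaConcaveOn (κ : ℝ) (I : Set ℝ) (u : ℝ → ℝ) : Prop :=
  ∀ r₀ ∈ I, ∀ r₁ ∈ I,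
    (r₀ ≠ r₁ → (κ ≤ 0 ∨ |r₁ - r₀| < Real.pi / Real.sqrt κ)) ∧
    ∀ t ∈ Set.Icc (0:ℝ) 1,
      sigmaCoeff κ (1 - t) |r₁ - r₀| * u r₀ + sigmaCoeff κ t |r₁ - r₀| * u r₁
        ≤ u ((1 - t) * r₀ + t * r₁)

/-- Right derivative `d⁺u(r) = L`, i.e. `(u (r+h) - u r)/h → L` as `h ↓ 0`. -/
def HasRightDerivAt (u : ℝ → ℝ) (r L : ℝ) : Prop :=
  Filter.Tendsto (fun h : ℝ => (u (r + h) - u r) / h) (nhdsWithin 0 (Set.Ioi 0)) (nhds L)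

/-- Left derivative `d⁻u(r) = L`, i.e. `(u (r-h) - u r)/(-h) → L` as `h ↓ 0`. -/
def HasLeftDerivAt (u : ℝ → ℝ) (r L : ℝ) : Prop :=
  Filter.Tendsto (fun h : ℝ => (u (r - h) - u r) / (-h)) (nhdsWithin 0 (Set.Ioi 0)) (nhds L)

/-- The Jacobian function `J_{H,K,N}(r) = (cos_{K/(N-1)}(r) + H/(N-1) sin_{K/(N-1)}(r))₊^{N-1}`. -/
noncomputable def Jac (H K N r : ℝ) : ℝ :=
  (max (cosK (K/(N-1)) r + (H/(N-1)) * sinK (K/(N-1)) r) 0) ^ (N-1)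

/-!
On `[r₀, r]` concavity says that `u` lies above its `σ_κ`-chord, the solution `v` of
`v'' + κ v = 0` that agrees with `u` at `r₀` and `r`. Both functions agree at `r₀`, so
`v' r₀ ≤ d⁺u(r₀)`. Since `v r = u r₀ * cosK κ (r - r₀) + v' r₀ * sinK κ (r - r₀)` equals `u r`
and `sinK κ (r - r₀)` is positive, the claim follows.
-/

section GeneralizedTrigonometry

variable {κ : ℝ}

theorem sinK_of_pos (hκ : 0 < κ) : sinK κ = fun x ↦ sin (√κ * x) / √κ :=
  funext fun _ ↦ if_pos hκ

theorem sinK_zero_left : sinK 0 = id := by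
  ext x
  simp [sinK]

theorem sinK_of_neg (hκ : κ < 0) : sinK κ = fun x ↦ sinh (√(-κ) * x) / √(-κ) := by
  ext x
  simp [sinK, hκ.not_gt, hκ.ne]

theorem cosK_of_pos (hκ : 0 < κ) : cosK κ = fun x ↦ cos (√κ * x) :=
  funext fun _ ↦ if_pos hκ

theorem cosK_zero_left : cosK 0 = 1 := by
  ext x
  simp [cosK]

theorem cosK_of_neg (hκ : κ < 0) : cosK κ = fun x ↦ cosh (√(-κ) * x) := by
  ext x
  simp [cosK, hκ.not_gt, hκ.ne]

theorem sinK_zero_right (κ : ℝ) : sinK κ 0 = 0 := by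
  simp [sinK]

theorem cosK_zero_right (κ : ℝ) : cosK κ 0 = 1 := by
  simp [cosK]

theorem hasDerivAt_sinK (κ x : ℝ) : HasDerivAt (sinK κ) (cosK κ x) x := by
  obtain hκ | rfl | hκ := lt_trichotomy κ 0
  · have hs : √(-κ) ≠ 0 := (sqrt_pos.2 (neg_pos.2 hκ)).ne'
    rw [sinK_of_neg hκ, cosK_of_neg hκ]
    simpa [hs] using ((hasDerivAt_id x).const_mul √(-κ)).sinh.div_const √(-κ)
  · rw [sinK_zero_left, cosK_zero_left]
    exact hasDerivAt_id x
  · have hs : √κ ≠ 0 := (sqrt_pos.2 hκ).ne'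
    rw [sinK_of_pos hκ, cosK_of_pos hκ]
    simpa [hs] using ((hasDerivAt_id x).const_mul √κ).sin.div_const √κ

theorem sinK_pos {x : ℝ} (hx : 0 < x) (hxκ : κ ≤ 0 ∨ x < π / √κ) : 0 < sinK κ x := by
  obtain hκ | rfl | hκ := lt_trichotomy κ 0
  · have hs : 0 < √(-κ) := sqrt_pos.2 (neg_pos.2 hκ)
    rw [sinK_of_neg hκ]
    exact div_pos (sinh_pos_iff.2 (mul_pos hs hx)) hs
  · rwa [sinK_zero_left]
  · have hs : 0 < √κ := sqrt_pos.2 hκ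
    have hxπ : √κ * x < π := (lt_div_iff₀' hs).1 (hxκ.resolve_left hκ.not_ge)
    rw [sinK_of_pos hκ]
    exact div_pos (sin_pos_of_pos_of_lt_pi (mul_pos hs hx) hxπ) hs

end GeneralizedTrigonometry

namespace HasRightDerivAt

variable {u v : ℝ → ℝ} {x a b : ℝ}

theorem of_hasDerivAt (hu : HasDerivAt u a x) : HasRightDerivAt u x a := by
  simpa only [HasRightDerivAt, smul_eq_mul, inv_mul_eq_div] using hu.tendsto_slope_zero_right

theorem le_of_eventually_le (hu : HasRightDerivAt u x a) (hv : HasRightDerivAt v x b)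
    (heq : u x = v x) (hle : ∀ᶠ y in 𝓝[>] x, u y ≤ v y) : a ≤ b := by
  have hshift : Tendsto (fun h ↦ x + h) (𝓝[>] 0) (𝓝[>] x) := by
    simpa using (tendsto_map (f := fun h ↦ x + h) (x := 𝓝[>] (0 : ℝ)))
  refine le_of_tendsto_of_tendsto hu hv ?_
  filter_upwards [hshift.eventually hle, self_mem_nhdsWithin] with h hh hpos
  rw [heq]
  exact div_le_div_of_nonneg_right (sub_le_sub_right hh _) (le_of_lt hpos)

end HasRightDerivAt

/-- The `σ_κ`-chord: the solution of `v'' + κ v = 0` with boundary values `v r₀ = a` and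
`v r₁ = b`, expressed in the basis `sinK κ (r₁ - ·)`, `sinK κ (· - r₀)`. It plays the role of the
affine chord of ordinary concavity, and makes sense only if `sinK κ (r₁ - r₀) ≠ 0`. -/
noncomputable def sigmaChord (κ r₀ r₁ a b x : ℝ) : ℝ :=
  (sinK κ (r₁ - x) * a + sinK κ (x - r₀) * b) / sinK κ (r₁ - r₀)

theorem sigmaChord_left {κ r₀ r₁ : ℝ} (hs : sinK κ (r₁ - r₀) ≠ 0) (a b : ℝ) :
    sigmaChord κ r₀ r₁ a b r₀ = a := by
  simp [sigmaChord, sinK_zero_right, hs]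

theorem hasDerivAt_sigmaChord (κ r₀ r₁ a b x : ℝ) :
    HasDerivAt (sigmaChord κ r₀ r₁ a b)
      ((cosK κ (x - r₀) * b - cosK κ (r₁ - x) * a) / sinK κ (r₁ - r₀)) x := by
  have hleft : HasDerivAt (fun y ↦ sinK κ (r₁ - y)) (-cosK κ (r₁ - x)) x :=
    (hasDerivAt_sinK κ (r₁ - x)).comp_const_sub r₁ x
  have hright : HasDerivAt (fun y ↦ sinK κ (y - r₀)) (cosK κ (x - r₀)) x :=
    (hasDerivAt_sinK κ (x - r₀)).comp_sub_const x r₀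
  exact (((hleft.mul_const a).add (hright.mul_const b)).div_const _).congr_deriv (by ring)

namespace IsSigmaConcaveOn

variable {κ r₀ r₁ : ℝ} {I : Set ℝ} {u : ℝ → ℝ}

theorem sinK_sub_pos (hu : IsSigmaConcaveOn κ I u) (hr₀ : r₀ ∈ I) (hr₁ : r₁ ∈ I)
    (hlt : r₀ < r₁) : 0 < sinK κ (r₁ - r₀) := by
  have hdiam := (hu r₀ hr₀ r₁ hr₁).1 hlt.ne
  rw [abs_of_pos (sub_pos.2 hlt)] at hdiam
  exact sinK_pos (sub_pos.2 hlt) hdiam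

theorem sigmaChord_le (hu : IsSigmaConcaveOn κ I u) (hr₀ : r₀ ∈ I) (hr₁ : r₁ ∈ I)
    (hlt : r₀ < r₁) {x : ℝ} (hx : x ∈ Icc r₀ r₁) :
    sigmaChord κ r₀ r₁ (u r₀) (u r₁) x ≤ u x := by
  have hL : 0 < r₁ - r₀ := sub_pos.2 hlt
  set t := (x - r₀) / (r₁ - r₀)
  have ht01 : t ∈ Icc (0 : ℝ) 1 :=
    ⟨div_nonneg (sub_nonneg.2 hx.1) hL.le, div_le_one_of_le₀ (sub_le_sub_right hx.2 r₀) hL.le⟩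
  have htL : t * (r₁ - r₀) = x - r₀ := div_mul_cancel₀ _ hL.ne'
  have htL' : (1 - t) * (r₁ - r₀) = r₁ - x := by linarith
  have htx : (1 - t) * r₀ + t * r₁ = x := by linarith
  have hineq := (hu r₀ hr₀ r₁ hr₁).2 t ht01
  rw [abs_of_pos hL, htx, sigmaCoeff, sigmaCoeff, if_neg hL.ne', if_neg hL.ne', htL, htL'] at hineq
  calc sigmaChord κ r₀ r₁ (u r₀) (u r₁) x
      = sinK κ (r₁ - x) / sinK κ (r₁ - r₀) * u r₀
          + sinK κ (x - r₀) / sinK κ (r₁ - r₀) * u r₁ := by rw [sigmaChord]; ring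
    _ ≤ u x := hineq

end IsSigmaConcaveOn

theorem sturm_comparison_general {κ r₀ r d : ℝ} {I : Set ℝ} {u : ℝ → ℝ}
    (hconc : IsSigmaConcaveOn κ I u) (hr₀ : r₀ ∈ I) (hr : r ∈ I) (hlt : r₀ < r)
    (hd : HasRightDerivAt u r₀ d) :
    u r ≤ u r₀ * cosK κ (r - r₀) + d * sinK κ (r - r₀) := by
  have hs : 0 < sinK κ (r - r₀) := hconc.sinK_sub_pos hr₀ hr hlt
  have hchord_le : ∀ᶠ x in 𝓝[>] r₀, sigmaChord κ r₀ r (u r₀) (u r) x ≤ u x := by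
    filter_upwards [Ioo_mem_nhdsGT hlt] with x hx
    exact hconc.sigmaChord_le hr₀ hr hlt (Ioo_subset_Icc_self hx)
  have hslope := (HasRightDerivAt.of_hasDerivAt
    (hasDerivAt_sigmaChord κ r₀ r (u r₀) (u r) r₀)).le_of_eventually_le hd
      (sigmaChord_left hs.ne' _ _) hchord_le
  rw [sub_self, cosK_zero_right, one_mul, div_le_iff₀ hs] at hslope
  linarith

/-- Lemma 4.1 / `lem:comparison`:
for a positive `σ_κ`-concave function `u` on `[0,θ]`, for `r₀ ∈ (0,θ)` and `r ∈ (r₀,θ)` we have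
`u(r) ≤ u(r₀) cos_κ(r - r₀) + d⁺u(r₀) sin_κ(r - r₀)`, and the right hand side is positive. -/
theorem sturm_comparison (θ κ : ℝ) (hθ : 0 < θ) (u : ℝ → ℝ)
    (hpos : ∀ r ∈ Set.Icc 0 θ, 0 < u r)
    (hconc : IsSigmaConcaveOn κ (Set.Icc 0 θ) u)
    (r₀ : ℝ) (hr₀ : r₀ ∈ Set.Ioo 0 θ)
    (d : ℝ) (hd : HasRightDerivAt u r₀ d)
    (r : ℝ) (hr : r ∈ Set.Ioo r₀ θ) :
    u r ≤ u r₀ * cosK κ (r - r₀) + d * sinK κ (r - r₀) ∧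
      0 < u r₀ * cosK κ (r - r₀) + d * sinK κ (r - r₀) := by
  have hle := sturm_comparison_general hconc (Ioo_subset_Icc_self hr₀)
    ⟨(hr₀.1.trans hr.1).le, hr.2.le⟩ hr.1 hd
  exact ⟨hle, (hpos r ⟨(hr₀.1.trans hr.1).le, hr.2.le⟩).trans_le hle⟩
end

section
/- Let (X,d) be a geodesic metric space, i.e. for any x, y ∈ X there exists an isometric embedding γ : [0, d(x,y)] → X with γ(0) = x and γ(d(x,y)) = y. Let Ω ⊆ X be a closed set with Ω ≠ ∅ and Ω ≠ X, and define the signed distance function d_S(x) := dist(x, Ω) − dist(x, closure(X ∖ Ω)). Then d_S is 1-Lipschitz: |d_S(x) − d_S(y)| ≤ d(x,y) for all x, y ∈ X. -/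
open Real Set Filter MeasureTheory Topology

/-! On either side of the boundary the signed distance is, up to sign, a distance to a fixed set, so
only a segment joining `y ∈ Ω` to `x ∉ Ω` needs an argument. Being connected, it contains a point
`z` of `closure Ω ∩ closure Ωᶜ`, so `dist(x, Ω) + dist(y, Ωᶜ) ≤ d(x, z) + d(z, y) = d(x, y)`. -/

/-- The signed distance function of the boundary of `s`, nonpositive on `s` and nonnegative off `s`.
The distance to `sᶜ` is the distance to its closure, so no closure is taken. As `Metric.infDist` is
`0` for the empty set, it is meaningful only for `s` nonempty and proper. -/
noncomputable def signedInfDist {X : Type*} [PseudoMetricSpace X] (s : Set X) (x : X) : ℝ :=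
  Metric.infDist x s - Metric.infDist x sᶜ

/-- A weak form of the notion of length space: any two points `x`, `y` lie in a connected set whose
points are almost between them. In a length space, a curve of length at most `r` joining `x` to `y`
is such a set. -/
def IsAlmostGeodesicSpace (X : Type*) [PseudoMetricSpace X] : Prop :=
  ∀ ⦃x y : X⦄ ⦃r : ℝ⦄, dist x y < r →
    ∃ C : Set X, IsPreconnected C ∧ x ∈ C ∧ y ∈ C ∧ ∀ z ∈ C, dist x z + dist z y ≤ r

section

variable {X : Type*} [PseudoMetricSpace X]

section

variable {γ : ℝ → X} {I : Set ℝ}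

theorem continuousOn_of_dist_eq_abs_sub (hγ : ∀ s ∈ I, ∀ t ∈ I, dist (γ s) (γ t) = |s - t|) :
    ContinuousOn γ I :=
  (LipschitzOnWith.of_dist_le' (K := 1) fun s hs t ht => by
    rw [hγ s hs t ht, one_mul, Real.dist_eq]).continuousOn

theorem dist_add_dist_of_dist_eq_abs_sub (hγ : ∀ s ∈ I, ∀ t ∈ I, dist (γ s) (γ t) = |s - t|)
    {r s t : ℝ} (hr : r ∈ I) (hs : s ∈ I) (ht : t ∈ I) (hrs : r ≤ s) (hst : s ≤ t) :
    dist (γ r) (γ s) + dist (γ s) (γ t) = dist (γ r) (γ t) := by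
  rw [hγ r hr s hs, hγ s hs t ht, hγ r hr t ht, abs_of_nonpos (sub_nonpos.2 hrs),
    abs_of_nonpos (sub_nonpos.2 hst), abs_of_nonpos (sub_nonpos.2 (hrs.trans hst))]
  ring

end

theorem IsAlmostGeodesicSpace.of_exists_geodesic
    (hgeo : ∀ x y : X, ∃ γ : ℝ → X, γ 0 = x ∧ γ (dist x y) = y ∧
      ∀ s ∈ Set.Icc 0 (dist x y), ∀ t ∈ Set.Icc 0 (dist x y), dist (γ s) (γ t) = |s - t|) :
    IsAlmostGeodesicSpace X := by
  intro x y r hr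
  obtain ⟨γ, hγx, hγy, hγ⟩ := hgeo x y
  have left_mem : 0 ∈ Icc 0 (dist x y) := left_mem_Icc.2 dist_nonneg
  have right_mem : dist x y ∈ Icc 0 (dist x y) := right_mem_Icc.2 dist_nonneg
  refine ⟨γ '' Icc 0 (dist x y), isPreconnected_Icc.image γ (continuousOn_of_dist_eq_abs_sub hγ),
    ⟨0, left_mem, hγx⟩, ⟨dist x y, right_mem, hγy⟩, ?_⟩
  rintro _ ⟨t, ht, rfl⟩
  have between := dist_add_dist_of_dist_eq_abs_sub hγ left_mem ht right_mem ht.1 ht.2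
  rw [hγx, hγy] at between
  exact between.trans_le hr.le

variable {s C : Set X} {x y : X}

theorem infDist_add_infDist_compl_le_of_isPreconnected {r : ℝ} (hC : IsPreconnected C)
    (hxC : x ∈ C) (hyC : y ∈ C) (hCr : ∀ z ∈ C, dist x z + dist z y ≤ r)
    (hx : x ∉ s) (hy : y ∈ s) : Metric.infDist x s + Metric.infDist y sᶜ ≤ r := by
  have covered : C ⊆ closure s ∪ closure sᶜ := fun z _ =>
    (em (z ∈ s)).imp (fun hz => subset_closure hz) (fun hz => subset_closure hz)
  obtain ⟨z, hzC, hzs, hzsc⟩ := isPreconnected_closed_iff.1 hC _ _ isClosed_closure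
    isClosed_closure covered ⟨y, hyC, subset_closure hy⟩ ⟨x, hxC, subset_closure hx⟩
  calc Metric.infDist x s + Metric.infDist y sᶜ
      = Metric.infDist x (closure s) + Metric.infDist y (closure sᶜ) := by
        rw [Metric.infDist_closure, Metric.infDist_closure]
    _ ≤ dist x z + dist y z :=
        add_le_add (Metric.infDist_le_dist_of_mem hzs) (Metric.infDist_le_dist_of_mem hzsc)
    _ = dist x z + dist z y := by rw [dist_comm y z]
    _ ≤ r := hCr z hzC

theorem IsAlmostGeodesicSpace.infDist_add_infDist_compl_le (hX : IsAlmostGeodesicSpace X)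
    (hx : x ∉ s) (hy : y ∈ s) : Metric.infDist x s + Metric.infDist y sᶜ ≤ dist x y := by
  refine le_of_forall_gt_imp_ge_of_dense fun r hr => ?_
  obtain ⟨C, hC, hxC, hyC, hCr⟩ := hX hr
  exact infDist_add_infDist_compl_le_of_isPreconnected hC hxC hyC hCr hx hy

theorem signedInfDist_of_mem (hx : x ∈ s) : signedInfDist s x = -Metric.infDist x sᶜ := by
  rw [signedInfDist, Metric.infDist_zero_of_mem hx, zero_sub]

theorem signedInfDist_of_notMem (hx : x ∉ s) : signedInfDist s x = Metric.infDist x s := by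
  rw [signedInfDist, Metric.infDist_zero_of_mem (s := sᶜ) hx, sub_zero]

end

theorem signedDist_one_lipschitz_general {X : Type*} [PseudoMetricSpace X]
    (hX : IsAlmostGeodesicSpace X) (s : Set X) (_hne : s.Nonempty) (_hproper : s ≠ Set.univ) :
    LipschitzWith 1 (signedInfDist s) := by
  refine LipschitzWith.of_le_add fun x y => ?_
  by_cases hx : x ∈ s <;> by_cases hy : y ∈ s
  · rw [signedInfDist_of_mem hx, signedInfDist_of_mem hy]
    linarith [Metric.infDist_le_infDist_add_dist (s := sᶜ) (x := y) (y := x), dist_comm x y]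
  · calc signedInfDist s x = -Metric.infDist x sᶜ := signedInfDist_of_mem hx
      _ ≤ 0 := neg_nonpos.2 Metric.infDist_nonneg
      _ ≤ Metric.infDist y s + dist x y := add_nonneg Metric.infDist_nonneg dist_nonneg
      _ = signedInfDist s y + dist x y := by rw [signedInfDist_of_notMem hy]
  · rw [signedInfDist_of_notMem hx, signedInfDist_of_mem hy]
    linarith [hX.infDist_add_infDist_compl_le hx hy]
  · rw [signedInfDist_of_notMem hx, signedInfDist_of_notMem hy]
    exact Metric.infDist_le_infDist_add_dist

/-- in a geodesic metric space, the signed distance function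
`d_S = dist(·, Ω) - dist(·, closure(Ωᶜ))` of the boundary of a nonempty closed proper
subset `Ω` is `1`-Lipschitz. -/
theorem signedDist_one_lipschitz {X : Type*} [MetricSpace X]
    (hgeo : ∀ x y : X, ∃ γ : ℝ → X, γ 0 = x ∧ γ (dist x y) = y ∧
      ∀ s ∈ Set.Icc 0 (dist x y), ∀ t ∈ Set.Icc 0 (dist x y), dist (γ s) (γ t) = |s - t|)
    (Ω : Set X) (hclosed : IsClosed Ω) (hne : Ω.Nonempty) (hproper : Ω ≠ Set.univ) :
    ∀ x y : X,
      |(Metric.infDist x Ω - Metric.infDist x (closure Ωᶜ))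
        - (Metric.infDist y Ω - Metric.infDist y (closure Ωᶜ))| ≤ dist x y := by
  simpa only [signedInfDist, Metric.infDist_closure, Real.dist_eq, NNReal.coe_one, one_mul] using
    (signedDist_one_lipschitz_general (.of_exists_geodesic hgeo) Ω hne hproper).dist_le_mul
end
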